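/- arXiv:2212.14600 — 2 statements merged into one kernel-verified Lean document; each statement's English description precedes it below -/
import Mathlib

section
/- Let $k$ be a commutative ring, let $G$ be a group, and let $n$ be a positive integer. If $n$ annihilates $H^1(G, M)$ for every representation $M$ of $G$ over $k$, then $n$ annihilates $H^i(G, M)$ for every $i \geq 1$ and every representation $M$ of $G$ over $k$. -/
open CategoryTheory CategoryTheory.Limits in
/-- Every representation embeds in one with vanishing cohomology in positive degrees. -/
theorem exists_mono_acyclic {k G : Type} [CommRing k] [Group G] (M : Rep k G) :
    ∃ (I : Rep k G) (f : M ⟶ I), Mono f ∧ ∀ i, IsZero (groupCohomology I (i + 1)) := by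
  let φ : (⊥ : Subgroup G) →* G := (⊥ : Subgroup G).subtype
  refine ⟨Rep.coind φ (Rep.res φ M), Rep.resCoindToHom φ M (Rep.res φ M) (𝟙 _), ?_, fun i => ?_⟩
  · rw [Rep.mono_iff_injective]
    intro a b hab
    have h := congrFun (congrArg Subtype.val hab) 1
    simpa using h
  · exact (isZero_groupCohomology_succ_of_subsingleton (Rep.res φ M) i).of_iso
      (groupCohomology.coindIso (Rep.res φ M) (i + 1))

open CategoryTheory CategoryTheory.Limits in
/-- Dimension shift. -/
theorem smul_groupCohomology_succ {k G : Type} [CommRing k] [Group G] (n : ℕ) (i : ℕ)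
    (h : ∀ (M : Rep k G) (x : groupCohomology M i), (n : ℤ) • x = 0)
    (M : Rep k G) (x : groupCohomology M (i + 1)) : (n : ℤ) • x = 0 := by
  obtain ⟨I, f, hf, hI⟩ := exists_mono_acyclic M
  let X : ShortComplex (Rep k G) := ShortComplex.mk f (cokernel.π f) (cokernel.condition f)
  have hX : X.ShortExact := { exact := ShortComplex.exact_cokernel f
                              mono_f := hf
                              epi_g := inferInstanceAs (Epi (cokernel.π f)) }
  have he : Epi (groupCohomology.δ hX i (i + 1) rfl) :=
    groupCohomology.epi_δ_of_isZero hX i (hI i)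
  obtain ⟨y, hy⟩ := (ModuleCat.epi_iff_surjective _).1 he x
  rw [← hy, ← map_zsmul, h, map_zero]

/-- Let `k` be a commutative ring, `G` a group and `n` a positive integer. If `n` annihilates
`H¹(G, M)` for every representation `M` of `G` over `k`, then `n` annihilates `Hⁱ(G, M)` for
every `i ≥ 1` and every representation `M`. -/
theorem smul_groupCohomology_eq_zero_of_smul_one {k G : Type} [CommRing k] [Group G]
    (n : ℕ) (hn : 0 < n)
    (h1 : ∀ (M : Rep k G) (x : groupCohomology M 1), (n : ℤ) • x = 0)
    (i : ℕ) (hi : 1 ≤ i) (M : Rep k G) (x : groupCohomology M i) :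
    (n : ℤ) • x = 0 := by
  induction i, hi using Nat.le_induction generalizing M with
  | base => exact h1 M x
  | succ i _ ih => exact smul_groupCohomology_succ n i ih M x
end

section
/- Let $k$ be a noetherian commutative ring, let $A$ be a commutative $k$-algebra that is finitely generated as a $k$-algebra, and let $G$ be a finite group acting on $A$ by $k$-algebra automorphisms. Then the invariant subalgebra $A^G = \{a \in A : g \cdot a = a \text{ for all } g \in G\}$ is a finitely generated $k$-algebra. -/
theorem invariants_finiteType_aux {k A G : Type} [CommRing k] [IsNoetherianRing k]
    [CommRing A] [Algebra k A] [Algebra.FiniteType k A] [Group G] [Fintype G]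
    (ρ : G →* (A ≃ₐ[k] A)) (S : Subalgebra k A)
    (hS : ∀ a : A, a ∈ S ↔ ∀ g : G, ρ g a = a) : Algebra.FiniteType k S := by
  letI : MulSemiringAction G A := MulSemiringAction.compHom A ρ
  have hsmul : ∀ (g : G) (a : A), g • a = ρ g a := fun _ _ => rfl
  haveI : Algebra.IsInvariant S A G :=
    ⟨fun b hb => ⟨⟨b, (hS b).2 fun g => by rw [← hsmul]; exact hb g⟩, rfl⟩⟩
  haveI : Algebra.IsIntegral S A := Algebra.IsInvariant.isIntegral S A G
  haveI : Algebra.FiniteType S A := Algebra.FiniteType.of_restrictScalars_finiteType k S A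
  haveI : Module.Finite S A := Algebra.IsIntegral.finite
  exact ⟨fg_of_fg_of_fg k S A Algebra.FiniteType.out Module.Finite.fg_top
    Subtype.val_injective⟩

/-- Let `k` be a noetherian commutative ring, `A` a finitely generated commutative `k`-algebra,
and `G` a finite group acting on `A` by `k`-algebra automorphisms. Then the invariant
subalgebra `A^G` is a finitely generated `k`-algebra. -/
theorem invariants_finiteType {k A G : Type} [CommRing k] [IsNoetherianRing k]
    [CommRing A] [Algebra k A] [Algebra.FiniteType k A] [Group G] [Fintype G]
    (ρ : G →* (A ≃ₐ[k] A)) :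
    Algebra.FiniteType k
      { carrier := {a : A | ∀ g : G, ρ g a = a}
        mul_mem' := fun {x y} hx hy g => by simp [map_mul, hx g, hy g]
        add_mem' := fun {x y} hx hy g => by simp [map_add, hx g, hy g]
        algebraMap_mem' := fun r g => by simp : Subalgebra k A } := by
  exact invariants_finiteType_aux ρ _ fun _ => Iff.rfl
end
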